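/- arXiv:2210.09974 — 6 statements merged into one kernel-verified Lean document; each statement's English description precedes it below -/
import Mathlib

section
/- For every n ≥ 1, the complex vector space of 2^n × 2^n complex matrices A satisfying A·R(π) = R(π)·A for every permutation π ∈ S_n (the commutant of the qubit-defining representation of S_n) has complex dimension equal to the binomial coefficient C(n+3, 3), i.e. the tetrahedral number Te_{n+1}. Consequently, the number of free complex parameters of an S_n-equivariant operator on n qubits is C(n+3,3) ∈ Θ(n³). -/
open Matrix

/-- The qubit-defining representation of `S_n` on `(ℂ²)^{⊗n}`: the permutation matrix acting on
the computational basis (indexed by bitstrings `z : Fin n → Fin 2`) via `R(π)|z⟩ = |z ∘ π⁻¹⟩`. -/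
noncomputable def qubitRep (n : ℕ) (π : Equiv.Perm (Fin n)) :
    Matrix (Fin n → Fin 2) (Fin n → Fin 2) ℂ :=
  Matrix.of fun y z => if y = (fun i => z (π.symm i)) then (1 : ℂ) else 0

/-- The commutant of the qubit-defining representation of `S_n`, as a complex subspace of the
`2^n × 2^n` matrices. -/
noncomputable def qubitCommutant (n : ℕ) :
    Submodule ℂ (Matrix (Fin n → Fin 2) (Fin n → Fin 2) ℂ) where
  carrier := {A | ∀ π : Equiv.Perm (Fin n), A * qubitRep n π = qubitRep n π * A}
  add_mem' := by
    intro A B hA hB π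
    simp [add_mul, mul_add, hA π, hB π]
  zero_mem' := by
    intro π
    simp
  smul_mem' := by
    intro c A hA π
    simp [Matrix.smul_mul, Matrix.mul_smul, hA π]

/-!
A matrix commutes with the permutation matrices of a group action on its index set exactly when its
entries are constant on the orbits of pairs of indices. For bitstrings permuted by `S_n`, a pair of
bitstrings is a word over the four-letter alphabet of pairs of bits, and two words are
rearrangements of each other exactly when they have the same multiset of letters. So the dimension
is the number of multisets of size `n` on four letters.
-/

open Equiv MulAction

section PermutationMatrices

variable {R X : Type*} [Fintype X] [DecidableEq X]

theorem commute_permMatrix_iff [NonAssocSemiring R] {σ : Perm X} {A : Matrix X X R} :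
    Commute (σ.permMatrix R) A ↔ ∀ x y, A (σ x) (σ y) = A x y := by
  rw [Commute, SemiconjBy, PEquiv.toMatrix_toPEquiv_mul, PEquiv.mul_toMatrix_toPEquiv,
    ← Matrix.ext_iff]
  refine forall_congr' fun x => (σ.forall_congr fun y => ?_).symm
  simp

variable (R X) [CommSemiring R] (G : Type*) [Group G] [MulAction G X]

/-- The commutant of the permutation representation of `G` on `X → R`, as a subalgebra of the
matrices indexed by `X`. -/
def permCommutant : Subalgebra R (Matrix X X R) :=
  Subalgebra.centralizer R (Set.range fun g : G => (toPerm g : Perm X).permMatrix R)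

variable {R X G}

theorem mem_permCommutant_iff {A : Matrix X X R} :
    A ∈ permCommutant R X G ↔ ∀ (g : G) (x y : X), A (g • x) (g • y) = A x y := by
  rw [permCommutant, Subalgebra.mem_centralizer_iff, Set.forall_mem_range]
  exact forall_congr' fun g => commute_permMatrix_iff

variable (R X G)

/-- A matrix in the commutant, regarded as a function on the orbits of pairs of indices (the
orbitals of the action). -/
def permCommutantEquivOrbitFun :
    permCommutant R X G ≃ₗ[R] (orbitRel.Quotient G (X × X) → R) where
  toFun A := Quotient.lift (fun p => A.1 p.1 p.2) <| by
    rintro _ p ⟨g, rfl⟩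
    exact mem_permCommutant_iff.1 A.2 g p.1 p.2
  invFun f := ⟨Matrix.of fun x y => f ⟦(x, y)⟧, mem_permCommutant_iff.2 fun g x y =>
    congrArg f <| Quotient.sound ⟨g, rfl⟩⟩
  map_add' _ _ := funext <| Quotient.ind fun _ => rfl
  map_smul' _ _ := funext <| Quotient.ind fun _ => rfl
  left_inv _ := rfl
  right_inv _ := funext <| Quotient.ind fun _ => rfl

theorem finrank_permCommutant [StrongRankCondition R] :
    Module.finrank R (permCommutant R X G) = Nat.card (orbitRel.Quotient G (X × X)) := by
  have := Fintype.ofFinite (orbitRel.Quotient G (X × X))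
  rw [(permCommutantEquivOrbitFun R X G).finrank_eq, Module.finrank_fintype_fun_eq_card,
    Nat.card_eq_fintype_card]

end PermutationMatrices

section Words

variable {ι α β : Type*} [Fintype ι]

theorem exists_perm_comp_eq_iff {v w : ι → β} :
    (∃ π : Perm ι, w ∘ π = v) ↔ Finset.univ.val.map v = Finset.univ.val.map w := by
  classical
  constructor
  · rintro ⟨π, rfl⟩
    rw [← Multiset.map_map, Multiset.map_univ_val_equiv]
  · intro h
    have card_fiber_eq (b : β) : Fintype.card {i // v i = b} = Fintype.card {i // w i = b} := by
      simpa [Multiset.count_map, Fintype.card_subtype, Finset.card_def, eq_comm]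
        using congrArg (Multiset.count b) h
    let fiberEquiv (b : β) := Fintype.equivOfCardEq (card_fiber_eq b)
    exact ⟨Equiv.ofFiberEquiv fiberEquiv, funext (Equiv.ofFiberEquiv_map fiberEquiv)⟩

/-- The multiset of letters of the word `w`. -/
def letters (w : ι → β) : Sym β (Fintype.card ι) :=
  ⟨Finset.univ.val.map w, by simp⟩

theorem letters_surjective : Function.Surjective (letters : (ι → β) → Sym β (Fintype.card ι)) := by
  classical
  rintro ⟨m, hm⟩
  have e : ι ≃ m := Fintype.equivOfCardEq (by simp [hm])
  refine ⟨fun i => (e i).1, Subtype.ext ?_⟩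
  change Finset.univ.val.map ((fun x : m => x.1) ∘ e) = m
  rw [← Multiset.map_map, Multiset.map_univ_val_equiv, Multiset.map_univ_coe]

theorem letters_eq_iff_orbitRel {v w : ι → β} :
    letters v = letters w ↔ orbitRel (Perm ι)ᵈᵐᵃ (ι → β) v w := by
  rw [orbitRel_apply, mem_orbit_iff, DomMulAct.mk.surjective.exists]
  exact Subtype.ext_iff.trans exists_perm_comp_eq_iff.symm

variable (ι α β)

/-- The orbits of words under rearrangement of positions, identified with multisets of letters. -/
noncomputable def wordOrbitEquivSym :
    orbitRel.Quotient (Perm ι)ᵈᵐᵃ (ι → β) ≃ Sym β (Fintype.card ι) :=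
  Equiv.ofBijective (Quotient.lift letters fun _ _ => letters_eq_iff_orbitRel.2)
    ⟨Quotient.ind₂ fun _ _ h => Quotient.sound (letters_eq_iff_orbitRel.1 h),
      Quotient.lift_surjective _ _ letters_surjective⟩

/-- The orbits of pairs of words under simultaneous rearrangement, identified with the orbits of
words of pairs. -/
def wordPairOrbitEquiv :
    orbitRel.Quotient (Perm ι)ᵈᵐᵃ ((ι → α) × (ι → β)) ≃
      orbitRel.Quotient (Perm ι)ᵈᵐᵃ (ι → α × β) :=
  Quotient.congr (Equiv.arrowProdEquivProdArrow ι (fun _ => α) (fun _ => β)).symm fun _ _ =>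
    exists_congr fun _ => (Equiv.arrowProdEquivProdArrow ι _ _).symm.injective.eq_iff.symm

theorem natCard_orbitRel_wordPair :
    Nat.card (orbitRel.Quotient (Perm ι)ᵈᵐᵃ ((ι → α) × (ι → β))) =
      (Nat.card α * Nat.card β).multichoose (Fintype.card ι) := by
  rw [Nat.card_congr ((wordPairOrbitEquiv ι α β).trans (wordOrbitEquivSym ι (α × β))),
    Sym.natCard_sym_eq_multichoose, Nat.card_prod]

end Words

theorem finrank_qubitCommutant_general (R ι α : Type*) [CommSemiring R] [StrongRankCondition R]
    [Fintype ι] [DecidableEq ι] [Fintype α] [DecidableEq α] :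
    Module.finrank R (permCommutant R (ι → α) (Perm ι)ᵈᵐᵃ) =
      (Fintype.card α ^ 2).multichoose (Fintype.card ι) := by
  rw [finrank_permCommutant, natCard_orbitRel_wordPair, Nat.card_eq_fintype_card, sq]

-- `permMatrix σ` sends the basis vector at `σ x` to the one at `x`, so that `R(π)` is the
-- permutation matrix of `z ↦ z ∘ π`, with no inverse.
theorem qubitRep_eq_permMatrix (n : ℕ) (π : Perm (Fin n)) :
    qubitRep n π = (toPerm (DomMulAct.mk π) : Perm (Fin n → Fin 2)).permMatrix ℂ := by
  ext y z
  have eq_comp_symm_iff : y = z ∘ π.symm ↔ z = y ∘ π := (π.eq_comp_symm y z).trans eq_comm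
  rw [qubitRep, Matrix.of_apply, Perm.permMatrix, PEquiv.toMatrix_toPEquiv_apply, Pi.single_apply]
  exact if_congr eq_comp_symm_iff rfl rfl

theorem qubitCommutant_eq_permCommutant (n : ℕ) :
    qubitCommutant n =
      Subalgebra.toSubmodule (permCommutant ℂ (Fin n → Fin 2) (Perm (Fin n))ᵈᵐᵃ) := by
  ext A
  rw [Subalgebra.mem_toSubmodule, permCommutant, Subalgebra.mem_centralizer_iff,
    Set.forall_mem_range, DomMulAct.mk.surjective.forall]
  simp only [← qubitRep_eq_permMatrix]
  exact forall_congr' fun π => eq_comm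

/-- **Free parameters in `S_n`-equivariant operators.** The commutant of the qubit-defining
representation of `S_n` has complex dimension the tetrahedral number `Te_{n+1} = C(n+3,3)`. -/
theorem finrank_qubitCommutant (n : ℕ) (hn : 1 ≤ n) :
    Module.finrank ℂ (qubitCommutant n) = (n + 3).choose 3 := by
  rw [qubitCommutant_eq_permCommutant, Subalgebra.finrank_toSubmodule,
    finrank_qubitCommutant_general, Fintype.card_fin, Fintype.card_fin, Nat.multichoose_eq,
    show 2 ^ 2 + n - 1 = n + 3 by lia, Nat.choose_symm_add]
end

section
/- For every natural number n ≥ 1, the sum over m = 0, 1, …, ⌊n/2⌋ of (n − 2m + 1) · [n!·(n − 2m + 1)! / ((n − m + 1)!·m!·(n − 2m)!)] equals 2^n. (This expresses the fact that the block dimensions d_λ = n−2m+1 and multiplicities m_λ = n!(n−2m+1)!/((n−m+1)! m! (n−2m)!) of the irreducible decomposition of the qubit-defining representation of S_n satisfy Σ_λ m_λ d_λ = 2^n.) -/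
/-!
Count the weight vectors of `(ℂ²)^{⊗n}` in two ways. The weight space of weight `n - 2k` has
dimension `n.choose k`. The block indexed by `m` has the weights `n - 2k` with `m ≤ k ≤ n - m`, each
once, and so contributes its multiplicity to exactly those weight spaces. Hence `n.choose k` is the
sum of the multiplicities over `m ≤ min k (n - k)`, and summing over `k` counts each multiplicity
`n - 2m + 1` times. Numerically, that decomposition of `n.choose k` is a telescoping sum, because
the multiplicity is `1` at `m = 0` and `n.choose m - n.choose (m - 1)` at `m ≥ 1`.
-/

/-- The multiplicity of the block `λ = (n - m, m)` in the qubit-defining representation of `S_n`,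
as a quotient of factorials. It is meaningful for `2 * m ≤ n`, where the natural-number
subtractions do not truncate and the division is exact. -/
def qubitMultiplicity (n m : ℕ) : ℕ :=
  n.factorial * (n - 2 * m + 1).factorial /
    ((n - m + 1).factorial * m.factorial * (n - 2 * m).factorial)

theorem qubitMultiplicity_eq_mul_choose_div {n m : ℕ} (hm : m ≤ n) :
    qubitMultiplicity n m = (n - 2 * m + 1) * n.choose m / (n - m + 1) := by
  have hpos : 0 < m.factorial * (n - m).factorial * (n - 2 * m).factorial := by positivity
  rw [qubitMultiplicity, ← Nat.mul_div_mul_right _ (n - m + 1) hpos,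
    ← Nat.choose_mul_factorial_mul_factorial hm, Nat.factorial_succ (n - m),
    Nat.factorial_succ (n - 2 * m)]
  congr 1 <;> ring

theorem qubitMultiplicity_zero (n : ℕ) : qubitMultiplicity n 0 = 1 := by
  simp [qubitMultiplicity_eq_mul_choose_div]

theorem choose_add_qubitMultiplicity_succ {n k : ℕ} (hk : 2 * (k + 1) ≤ n) :
    n.choose k + qubitMultiplicity n (k + 1) = n.choose (k + 1) := by
  obtain ⟨r, hr⟩ := Nat.exists_eq_add_of_le hk
  have hratio : n.choose (k + 1) * (k + 1) = n.choose k * (k + r + 2) := by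
    rw [Nat.choose_succ_right_eq, show n - k = k + r + 2 by omega]
  obtain ⟨d, hd⟩ := Nat.exists_eq_add_of_le
    (Nat.choose_le_succ_of_lt_half_left (show k < n / 2 by omega))
  have hdiff : (r + 1) * n.choose (k + 1) = d * (k + r + 2) := by
    rw [hd] at hratio ⊢
    linarith
  rw [qubitMultiplicity_eq_mul_choose_div (by omega), show n - 2 * (k + 1) = r by omega,
    show n - (k + 1) + 1 = k + r + 2 by omega, hdiff, Nat.mul_div_cancel _ (by omega), hd]

theorem sum_range_qubitMultiplicity {n k : ℕ} (hk : 2 * k ≤ n) :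
    ∑ m ∈ Finset.range (k + 1), qubitMultiplicity n m = n.choose k := by
  induction k with
  | zero => simp [qubitMultiplicity_zero]
  | succ k ih =>
    rw [Finset.sum_range_succ, ih (by omega), choose_add_qubitMultiplicity_succ hk]

theorem sum_range_min_qubitMultiplicity {n k : ℕ} (hk : k ≤ n) :
    ∑ m ∈ Finset.range (min k (n - k) + 1), qubitMultiplicity n m = n.choose k := by
  rcases le_total k (n - k) with h | h
  · rw [min_eq_left h, sum_range_qubitMultiplicity (by omega)]
  · rw [min_eq_right h, sum_range_qubitMultiplicity (by omega), Nat.choose_symm hk]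

theorem sum_range_half_nsmul_eq_sum_sum_range_min {M : Type*} [AddCommMonoid M] (n : ℕ)
    (f : ℕ → M) :
    ∑ m ∈ Finset.range (n / 2 + 1), (n - 2 * m + 1) • f m =
      ∑ k ∈ Finset.range (n + 1), ∑ m ∈ Finset.range (min k (n - k) + 1), f m := by
  calc ∑ m ∈ Finset.range (n / 2 + 1), (n - 2 * m + 1) • f m
      = ∑ m ∈ Finset.range (n / 2 + 1), ∑ _k ∈ Finset.Icc m (n - m), f m := by
        refine Finset.sum_congr rfl fun m hm => ?_
        rw [Finset.mem_range] at hm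
        rw [Finset.sum_const, Nat.card_Icc, show n - m + 1 - m = n - 2 * m + 1 by omega]
    _ = ∑ k ∈ Finset.range (n + 1), ∑ m ∈ Finset.range (min k (n - k) + 1), f m := by
        refine Finset.sum_comm' fun m k => ?_
        simp only [Finset.mem_range, Finset.mem_Icc]
        omega

/-- **Total dimension of the isotypic decomposition.** The block dimensions
`d_λ = n − 2m + 1` and multiplicities `m_λ = n!(n−2m+1)!/((n−m+1)! m! (n−2m)!)` of the
qubit-defining representation of `S_n` satisfy `Σ_λ m_λ d_λ = 2^n`. -/
theorem sum_mult_dim_eq_two_pow (n : ℕ) (hn : 1 ≤ n) :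
    ∑ m ∈ Finset.range (n / 2 + 1),
      (n - 2 * m + 1) *
        (n.factorial * (n - 2 * m + 1).factorial /
          ((n - m + 1).factorial * m.factorial * (n - 2 * m).factorial)) = 2 ^ n := by
  calc ∑ m ∈ Finset.range (n / 2 + 1), (n - 2 * m + 1) * qubitMultiplicity n m
      = ∑ k ∈ Finset.range (n + 1),
          ∑ m ∈ Finset.range (min k (n - k) + 1), qubitMultiplicity n m :=
        sum_range_half_nsmul_eq_sum_sum_range_min n (qubitMultiplicity n)
    _ = ∑ k ∈ Finset.range (n + 1), n.choose k :=
        Finset.sum_congr rfl fun _ hk =>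
          sum_range_min_qubitMultiplicity (Nat.lt_succ_iff.mp (Finset.mem_range.mp hk))
    _ = 2 ^ n := Nat.sum_range_choose n
end

section
/- Fix d ≥ 2 and let μ denote the normalized Haar probability measure on the group U(d) of d×d complex unitary matrices. For any d×d complex matrices H and O, the integral over U ∈ U(d) of Tr[(H·(U† O U) − (U† O U)·H)²] equals −(2d/(d²−1)) · Δ(H) · Δ(O). -/
open Matrix MeasureTheory

/-- `Δ(B) = Tr[B²] − (Tr B)²/d`. -/
noncomputable def DeltaM (d : ℕ) (B : Matrix (Fin d) (Fin d) ℂ) : ℂ :=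
  (B * B).trace - B.trace ^ 2 / (d : ℂ)

/-!
For fixed `H` and `K` the twirl `Φ(X) = ∫ (U H U†) X (U K U†) dμ(U)` commutes with unitary
conjugation, by invariance of the Haar measure. Such a map is a combination `γ X + β Tr(X) 1`:
conjugation by reflections makes `Φ(E_pp)` diagonal, conjugation by permutation matrices leaves only
two values on these diagonals, and by the spectral theorem a unitarily equivariant map is determined
by the `Φ(E_pp)`. The constants are read off from `Tr Φ(1) = Tr(HK)` and
`∑ i, j, Φ(E_ij)_ij = Tr H · Tr K`. Expanding the product of two commutators and using cyclicity of
the trace turns the integral into traces of such twirls.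
-/

section UnitaryConjugation

open Unitary

variable {n R : Type*} [Fintype n] [DecidableEq n] [CommRing R] [StarRing R]

theorem trace_conjStarAlgAut (U : unitaryGroup n R) (X : Matrix n n R) :
    (conjStarAlgAut R _ U X).trace = X.trace := by
  rw [conjStarAlgAut_apply, trace_mul_cycle, coe_star_mul_self, one_mul]

/-- The permutation matrix of `σ` as an element of the unitary group; conjugating by it permutes
the entries of a matrix. -/
def permUnitary (σ : Equiv.Perm n) : unitaryGroup n R :=
  ⟨σ.permMatrix R, by
    rw [mem_unitaryGroup_iff, star_eq_conjTranspose, conjTranspose_permMatrix, ← permMatrix_mul,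
      inv_mul_cancel, permMatrix_one]⟩

theorem conjStarAlgAut_permUnitary (σ : Equiv.Perm n) (X : Matrix n n R) :
    conjStarAlgAut R (Matrix n n R) (permUnitary σ) X = X.submatrix σ σ := by
  simp [conjStarAlgAut_apply, permUnitary, star_eq_conjTranspose, PEquiv.toMatrix_toPEquiv_mul,
    PEquiv.mul_toMatrix_toPEquiv, Equiv.Perm.inv_def]

/-- The reflection negating the basis vector `e_a`, as an element of the unitary group; conjugating
by it detects the off-diagonal entries of row `a`. -/
def reflectionUnitary (a : n) : unitaryGroup n R :=
  ⟨diagonal (Function.update 1 a (-1)), by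
    rw [mem_unitaryGroup_iff, star_eq_conjTranspose, diagonal_conjTranspose,
      diagonal_mul_diagonal, ← diagonal_one]
    congr 1
    ext i
    by_cases h : i = a <;> simp [h]⟩

theorem conjStarAlgAut_reflectionUnitary_diagonal (a : n) (v : n → R) :
    conjStarAlgAut R (Matrix n n R) (reflectionUnitary a) (diagonal v) = diagonal v := by
  rw [conjStarAlgAut_apply, reflectionUnitary, (commute_diagonal _ v).eq, mul_assoc]
  exact (congrArg _ (coe_mul_star_self (reflectionUnitary a))).trans (mul_one _)

theorem conjStarAlgAut_reflectionUnitary_apply_of_ne {a b : n} (hab : a ≠ b) (X : Matrix n n R) :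
    conjStarAlgAut R (Matrix n n R) (reflectionUnitary a) X a b = -X a b := by
  simp [conjStarAlgAut_apply, reflectionUnitary, star_eq_conjTranspose, hab.symm]

end UnitaryConjugation

theorem exists_eq_ite_of_perm_invariant {ι α : Type*} [DecidableEq ι] [Nontrivial ι]
    {f : ι → ι → α} (hf : ∀ (σ : Equiv.Perm ι) i j, f (σ i) (σ j) = f i j) :
    ∃ a b, ∀ i j, f i j = if i = j then a else b := by
  obtain ⟨p, q, hpq⟩ := exists_pair_ne ι
  refine ⟨f p p, f p q, fun i j ↦ ?_⟩
  split_ifs with hij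
  · subst hij
    simpa only [Equiv.swap_apply_left] using hf (Equiv.swap p i) p p
  · obtain ⟨σ, rfl, rfl⟩ := MulAction.is_two_pretransitive_iff.mp
      (Equiv.Perm.isMultiplyPretransitive ι 2) hpq hij
    exact hf σ p q

section Depolarizing

variable {n R : Type*} [Fintype n] [DecidableEq n] [CommRing R]

/-- The depolarizing map `X ↦ γ X + β Tr(X) 1`, the normal form of a unitarily equivariant map.
The coefficients are unconstrained, so it need not preserve the trace. -/
def depolarizing (γ β : R) : Matrix n n R →ₗ[R] Matrix n n R :=
  γ • LinearMap.id + β • (traceLinearMap n R R).smulRight 1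

theorem depolarizing_apply (γ β : R) (X : Matrix n n R) :
    depolarizing γ β X = γ • X + (β * X.trace) • 1 := by
  simp [depolarizing, smul_smul]

theorem trace_depolarizing_mul (γ β : R) (X Y : Matrix n n R) :
    (depolarizing γ β X * Y).trace = γ * (X * Y).trace + β * X.trace * Y.trace := by
  simp [depolarizing_apply, add_mul]

theorem trace_depolarizing (γ β : R) (X : Matrix n n R) :
    (depolarizing γ β X).trace = (γ + β * Fintype.card n) * X.trace := by
  simp only [depolarizing_apply, trace_add, trace_smul, trace_one, smul_eq_mul]
  ring

theorem sum_depolarizing_single (γ β : R) :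
    ∑ i : n, ∑ j : n, depolarizing γ β (single i j (1 : R)) i j =
      γ * Fintype.card n ^ 2 + β * Fintype.card n := by
  have entry (i j : n) : depolarizing γ β (single i j (1 : R)) i j =
      γ + if i = j then β else 0 := by
    by_cases hij : i = j
    · subst hij; simp [depolarizing_apply]
    · simp [depolarizing_apply, hij]
  simp only [entry, Finset.sum_add_distrib, Finset.sum_ite_eq, Finset.mem_univ, if_true,
    Finset.sum_const, Finset.card_univ, nsmul_eq_mul]
  ring

end Depolarizing

section UnitarilyEquivariant

open Unitary

variable {n R : Type*} [Fintype n] [DecidableEq n] [CommRing R] [StarRing R]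

/-- `Φ` commutes with conjugation by every unitary matrix, the symmetry that Haar averages
acquire. -/
def IsUnitarilyEquivariant (Φ : Matrix n n R →ₗ[R] Matrix n n R) : Prop :=
  ∀ (U : unitaryGroup n R) (X : Matrix n n R),
    Φ (conjStarAlgAut R _ U X) = conjStarAlgAut R _ U (Φ X)

theorem isUnitarilyEquivariant_depolarizing (γ β : R) :
    IsUnitarilyEquivariant (depolarizing γ β : Matrix n n R →ₗ[R] Matrix n n R) := fun U X ↦ by
  simp only [depolarizing_apply, trace_conjStarAlgAut, map_add, map_smul, map_one]

namespace IsUnitarilyEquivariant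

variable {Φ : Matrix n n R →ₗ[R] Matrix n n R}

theorem apply_diagonal_apply_of_ne [IsAddTorsionFree R] (hΦ : IsUnitarilyEquivariant Φ)
    (v : n → R) {i j : n} (hij : i ≠ j) : Φ (diagonal v) i j = 0 := by
  have h := hΦ (reflectionUnitary i) (diagonal v)
  rw [conjStarAlgAut_reflectionUnitary_diagonal] at h
  exact self_eq_neg.mp
    ((congr_fun₂ h i j).trans (conjStarAlgAut_reflectionUnitary_apply_of_ne hij _))

theorem apply_single_perm (hΦ : IsUnitarilyEquivariant Φ) (σ : Equiv.Perm n) (p q : n) :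
    Φ (single (σ p) (σ p) 1) (σ q) (σ q) = Φ (single p p 1) q q := by
  have h := hΦ (permUnitary σ) (single (σ p) (σ p) 1)
  rw [conjStarAlgAut_permUnitary, conjStarAlgAut_permUnitary, submatrix_single_equiv,
    σ.symm_apply_apply] at h
  exact (congr_fun₂ h q q).symm

theorem ext_single_self {Φ Ψ : Matrix n n ℂ →ₗ[ℂ] Matrix n n ℂ}
    (hΦ : IsUnitarilyEquivariant Φ) (hΨ : IsUnitarilyEquivariant Ψ)
    (h : ∀ p, Φ (single p p 1) = Ψ (single p p 1)) : Φ = Ψ := by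
  have eq_on_diagonal (v : n → ℂ) : Φ (diagonal v) = Ψ (diagonal v) := by
    have expand : diagonal v = ∑ p, v p • single p p (1 : ℂ) := by
      simp [← sum_single_eq_diagonal]
    simp only [expand, map_sum, map_smul, h]
  have eq_on_hermitian {X : Matrix n n ℂ} (hX : X.IsHermitian) : Φ X = Ψ X := by
    rw [hX.spectral_theorem, hΦ, hΨ, eq_on_diagonal]
  ext1 X
  rw [← realPart_add_I_smul_imaginaryPart X]
  simp only [map_add, map_smul, eq_on_hermitian (realPart X).2,
    eq_on_hermitian (imaginaryPart X).2]

theorem exists_eq_depolarizing [Nontrivial n] {Φ : Matrix n n ℂ →ₗ[ℂ] Matrix n n ℂ}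
    (hΦ : IsUnitarilyEquivariant Φ) : ∃ γ β, Φ = depolarizing γ β := by
  obtain ⟨a, b, hab⟩ := exists_eq_ite_of_perm_invariant
    (f := fun p q ↦ Φ (single p p 1) q q) hΦ.apply_single_perm
  refine ⟨a - b, b, hΦ.ext_single_self (isUnitarilyEquivariant_depolarizing _ _) fun p ↦ ?_⟩
  ext i j
  by_cases hij : i = j
  · subst hij
    rw [hab]
    by_cases hpi : p = i <;> simp [depolarizing_apply, hpi]
  · rw [← diagonal_single, hΦ.apply_diagonal_apply_of_ne _ hij]
    simp [depolarizing_apply, hij]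

end IsUnitarilyEquivariant

end UnitarilyEquivariant

section TraceIdentities

open Unitary

variable {n R : Type*} [Fintype n]

/-- The polarisation of `DeltaM`: `card n` times the covariance of `A` and `B` under the
normalised trace. -/
noncomputable def traceCov (A B : Matrix n n ℂ) : ℂ :=
  (A * B).trace - A.trace * B.trace / Fintype.card n

theorem trace_lie_mul_lie [CommRing R] (A B X Y : Matrix n n R) :
    (⁅A, X⁆ * ⁅B, Y⁆).trace = (A * X * B * Y).trace + (A * Y * B * X).trace
      - (B * A * (X * Y)).trace - (A * B * (Y * X)).trace := by
  have h₁ : (A * X * (B * Y)).trace = (A * X * B * Y).trace := by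
    rw [← mul_assoc]
  have h₂ : (A * X * (Y * B)).trace = (B * A * (X * Y)).trace := by
    rw [← mul_assoc, trace_mul_comm]
    simp only [mul_assoc]
  have h₃ : (X * A * (B * Y)).trace = (A * B * (Y * X)).trace := by
    rw [mul_assoc, trace_mul_comm]
    simp only [mul_assoc]
  have h₄ : (X * A * (Y * B)).trace = (A * Y * B * X).trace := by
    rw [mul_assoc, trace_mul_comm]
    simp only [mul_assoc]
  simp only [Ring.lie_def, sub_mul, mul_sub, trace_sub, h₁, h₂, h₃, h₄]
  ring

theorem trace_lie_conjTranspose_mul_mul [DecidableEq n] [CommRing R] [StarRing R]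
    (U : unitaryGroup n R) (H K X Y : Matrix n n R) :
    (⁅H, (U : Matrix n n R)ᴴ * X * U⁆ * ⁅K, (U : Matrix n n R)ᴴ * Y * U⁆).trace =
      (⁅conjStarAlgAut R _ U H, X⁆ * ⁅conjStarAlgAut R _ U K, Y⁆).trace := by
  have cancel (Z : Matrix n n R) : conjStarAlgAut R _ U ((U : Matrix n n R)ᴴ * Z * U) = Z :=
    (conjStarAlgAut R (Matrix n n R) U).apply_symm_apply Z
  rw [← trace_conjStarAlgAut U]
  simp only [Ring.lie_def, map_mul, map_sub, cancel]

end TraceIdentities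

theorem mul_single_mul_apply {l m n o R : Type*} [Fintype m] [Fintype n] [DecidableEq m]
    [DecidableEq n] [Semiring R] (A : Matrix l m R) (B : Matrix n o R) (i : m) (j : n)
    (k : l) (k' : o) : (A * single i j (1 : R) * B : Matrix l o R) k k' = A k i * B j k' := by
  simp [mul_apply, single_apply, ite_and]

section HaarTwirl

open scoped Matrix.Norms.L2Operator
open Unitary

variable {n : Type*} [Fintype n] [DecidableEq n]

instance instCompactSpaceUnitaryGroup {𝕜 : Type*} [RCLike 𝕜] :
    CompactSpace (unitaryGroup n 𝕜) := by
  have : ProperSpace (Matrix n n 𝕜) := FiniteDimensional.proper 𝕜 _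
  refine isCompact_iff_compactSpace.mp
    (Metric.isCompact_of_isClosed_isBounded isClosed_unitary ?_)
  refine (Metric.isBounded_closedBall (x := (0 : Matrix n n 𝕜)) (r := 1)).subset fun U hU ↦ ?_
  cases isEmpty_or_nonempty n
  · simp [Subsingleton.elim U 0]
  · simp [CStarRing.norm_of_mem_unitary hU]

theorem continuous_conjStarAlgAut_mul_mul (H K X : Matrix n n ℂ) :
    Continuous fun U : unitaryGroup n ℂ ↦
      conjStarAlgAut ℂ _ U H * X * conjStarAlgAut ℂ _ U K := by
  simp only [conjStarAlgAut_apply]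
  fun_prop

variable [MeasurableSpace (unitaryGroup n ℂ)] [BorelSpace (unitaryGroup n ℂ)]
  (μ : Measure (unitaryGroup n ℂ))

theorem integrable_conjStarAlgAut_mul_mul [IsFiniteMeasure μ] (H K X : Matrix n n ℂ) :
    Integrable (fun U ↦ conjStarAlgAut ℂ _ U H * X * conjStarAlgAut ℂ _ U K) μ :=
  (continuous_conjStarAlgAut_mul_mul H K X).integrable_of_hasCompactSupport
    (.of_compactSpace _)

/-- The twirled second moment `X ↦ ∫ (U H U†) X (U K U†) dμ(U)`, linear in `X` because the
integrand is continuous on a compact group. -/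
noncomputable def haarTwirl [IsFiniteMeasure μ] (H K : Matrix n n ℂ) :
    Matrix n n ℂ →ₗ[ℂ] Matrix n n ℂ where
  toFun X := ∫ U, conjStarAlgAut ℂ _ U H * X * conjStarAlgAut ℂ _ U K ∂μ
  map_add' X Y := by
    simp only [mul_add, add_mul]
    exact integral_add (integrable_conjStarAlgAut_mul_mul μ H K X)
      (integrable_conjStarAlgAut_mul_mul μ H K Y)
  map_smul' c X := by
    simp only [mul_smul_comm, smul_mul_assoc, integral_smul, RingHom.id_apply]

theorem map_haarTwirl [IsFiniteMeasure μ] {E : Type*} [NormedAddCommGroup E] [NormedSpace ℂ E]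
    [CompleteSpace E] (L : Matrix n n ℂ →ₗ[ℂ] E) (H K X : Matrix n n ℂ) :
    L (haarTwirl μ H K X) = ∫ U, L (conjStarAlgAut ℂ _ U H * X * conjStarAlgAut ℂ _ U K) ∂μ :=
  (L.toContinuousLinearMap.integral_comp_comm (integrable_conjStarAlgAut_mul_mul μ H K X)).symm

theorem integrable_map_conjStarAlgAut_mul_mul [IsFiniteMeasure μ] {E : Type*}
    [NormedAddCommGroup E] [NormedSpace ℂ E] (L : Matrix n n ℂ →ₗ[ℂ] E) (H K X : Matrix n n ℂ) :
    Integrable (fun U ↦ L (conjStarAlgAut ℂ _ U H * X * conjStarAlgAut ℂ _ U K)) μ :=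
  L.toContinuousLinearMap.integrable_comp (integrable_conjStarAlgAut_mul_mul μ H K X)

theorem isUnitarilyEquivariant_haarTwirl [IsFiniteMeasure μ] [μ.IsMulLeftInvariant]
    (H K : Matrix n n ℂ) : IsUnitarilyEquivariant (haarTwirl μ H K) := fun V X ↦ by
  calc haarTwirl μ H K (conjStarAlgAut ℂ _ V X)
      = ∫ U, conjStarAlgAut ℂ _ (V * U) H * conjStarAlgAut ℂ _ V X *
          conjStarAlgAut ℂ _ (V * U) K ∂μ := (integral_mul_left_eq_self _ V).symm
    _ = ∫ U, conjStarAlgAut ℂ _ V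
          (conjStarAlgAut ℂ _ U H * X * conjStarAlgAut ℂ _ U K) ∂μ := by
      simp only [conjStarAlgAut_mul_apply, map_mul _ (_ * _), map_mul _ _ X]
    _ = conjStarAlgAut ℂ _ V (haarTwirl μ H K X) :=
      (map_haarTwirl μ (conjStarAlgAut ℂ (Matrix n n ℂ) V).toAlgEquiv.toLinearMap H K X).symm

theorem trace_haarTwirl_mul [IsFiniteMeasure μ] (H K X Y : Matrix n n ℂ) :
    (haarTwirl μ H K X * Y).trace =
      ∫ U, (conjStarAlgAut ℂ _ U H * X * conjStarAlgAut ℂ _ U K * Y).trace ∂μ :=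
  map_haarTwirl μ (traceLinearMap n ℂ ℂ ∘ₗ LinearMap.mulRight ℂ Y) H K X

theorem trace_haarTwirl [IsFiniteMeasure μ] (H K X : Matrix n n ℂ) :
    (haarTwirl μ H K X).trace =
      ∫ U, (conjStarAlgAut ℂ _ U H * X * conjStarAlgAut ℂ _ U K).trace ∂μ :=
  map_haarTwirl μ (traceLinearMap n ℂ ℂ) H K X

theorem trace_haarTwirl_one [IsProbabilityMeasure μ] (H K : Matrix n n ℂ) :
    (haarTwirl μ H K 1).trace = (H * K).trace := by
  simpa [← map_mul, trace_conjStarAlgAut, -conjStarAlgAut_apply] using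
    trace_haarTwirl μ H K 1

theorem haarTwirl_single_apply [IsFiniteMeasure μ] (H K : Matrix n n ℂ) (i j : n) :
    haarTwirl μ H K (single i j 1) i j =
      ∫ U, conjStarAlgAut ℂ (Matrix n n ℂ) U H i i *
        conjStarAlgAut ℂ (Matrix n n ℂ) U K j j ∂μ := by
  simpa only [entryLinearMap_apply, mul_single_mul_apply] using
    map_haarTwirl μ (entryLinearMap ℂ ℂ i j) H K (single i j 1)

theorem sum_haarTwirl_single [IsProbabilityMeasure μ] (H K : Matrix n n ℂ) :
    ∑ i, ∑ j, haarTwirl μ H K (single i j 1) i j = H.trace * K.trace := by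
  have integrable_entry (i j : n) : Integrable (fun U ↦
      conjStarAlgAut ℂ (Matrix n n ℂ) U H i i * conjStarAlgAut ℂ (Matrix n n ℂ) U K j j) μ :=
    (integrable_map_conjStarAlgAut_mul_mul μ (entryLinearMap ℂ ℂ i j) H K
      (single i j 1)).congr (.of_forall fun U ↦ mul_single_mul_apply _ _ i j i j)
  calc
    ∑ i, ∑ j, haarTwirl μ H K (single i j 1) i j
    _ = ∫ U, ∑ i, ∑ j, conjStarAlgAut ℂ (Matrix n n ℂ) U H i i *
          conjStarAlgAut ℂ (Matrix n n ℂ) U K j j ∂μ := by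
      simp only [haarTwirl_single_apply, integral_finsetSum, integrable_entry,
        integrable_finsetSum, implies_true]
    _ = ∫ U, (conjStarAlgAut ℂ _ U H).trace * (conjStarAlgAut ℂ _ U K).trace ∂μ := by
      simp only [trace, diag_apply, Finset.sum_mul_sum]
    _ = H.trace * K.trace := by
      simp only [trace_conjStarAlgAut, integral_const, probReal_univ, one_smul]

theorem haarTwirl_eq_depolarizing [Nontrivial n] [IsProbabilityMeasure μ] [μ.IsMulLeftInvariant]
    (H K : Matrix n n ℂ) :
    haarTwirl μ H K = depolarizing
      ((H * K).trace / Fintype.card n -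
        Fintype.card n * traceCov H K / (Fintype.card n ^ 2 - 1))
      (traceCov H K / (Fintype.card n ^ 2 - 1)) := by
  obtain ⟨γ, β, hΦ⟩ := (isUnitarilyEquivariant_haarTwirl μ H K).exists_eq_depolarizing
  have hone := trace_haarTwirl_one μ H K
  have hsum := sum_haarTwirl_single μ H K
  have card_ne_zero : (Fintype.card n : ℂ) ≠ 0 := by simp
  have card_sq_sub_one_ne_zero : (Fintype.card n : ℂ) ^ 2 - 1 ≠ 0 := by
    have : Fintype.card n ^ 2 ≠ 1 := by simpa using Fintype.one_lt_card.ne'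
    exact sub_ne_zero.mpr (mod_cast this)
  rw [hΦ, trace_depolarizing, trace_one] at hone
  rw [hΦ, sum_depolarizing_single] at hsum
  have hβ : β = traceCov H K / (Fintype.card n ^ 2 - 1) := by
    rw [traceCov, ← hone, ← hsum]
    field_simp
    ring
  have hγ : γ = (H * K).trace / Fintype.card n - Fintype.card n * β := by
    rw [← hone]
    field_simp
    ring
  rw [hΦ, mul_div_assoc, ← hβ, ← hγ]

theorem haarTwirl_right_one [Nontrivial n] [IsProbabilityMeasure μ] [μ.IsMulLeftInvariant]
    (H : Matrix n n ℂ) :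
    haarTwirl μ H 1 = depolarizing (H.trace / Fintype.card n) 0 := by
  simp [haarTwirl_eq_depolarizing, traceCov]

theorem integral_trace_lie_mul_lie [IsFiniteMeasure μ] (H K X Y : Matrix n n ℂ) :
    ∫ U : unitaryGroup n ℂ,
        (⁅H, (U : Matrix n n ℂ)ᴴ * X * U⁆ * ⁅K, (U : Matrix n n ℂ)ᴴ * Y * U⁆).trace ∂μ =
      (haarTwirl μ H K X * Y).trace + (haarTwirl μ H K Y * X).trace
        - (haarTwirl μ (K * H) 1 (X * Y)).trace - (haarTwirl μ (H * K) 1 (Y * X)).trace := by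
  have integrable_interleaved (X Y : Matrix n n ℂ) : Integrable
      (fun U ↦ (conjStarAlgAut ℂ _ U H * X * conjStarAlgAut ℂ _ U K * Y).trace) μ :=
    integrable_map_conjStarAlgAut_mul_mul μ
      (traceLinearMap n ℂ ℂ ∘ₗ LinearMap.mulRight ℂ Y) H K X
  have integrable_grouped (A Z : Matrix n n ℂ) : Integrable
      (fun U ↦ (conjStarAlgAut ℂ _ U A * Z * conjStarAlgAut ℂ _ U 1).trace) μ :=
    integrable_map_conjStarAlgAut_mul_mul μ (traceLinearMap n ℂ ℂ) A 1 Z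
  have add_integrable := (integrable_interleaved X Y).fun_add (integrable_interleaved Y X)
  have sub_integrable := add_integrable.sub' (integrable_grouped (K * H) (X * Y))
  rw [trace_haarTwirl_mul, trace_haarTwirl_mul, trace_haarTwirl, trace_haarTwirl,
    ← integral_add (integrable_interleaved X Y) (integrable_interleaved Y X),
    ← integral_sub add_integrable (integrable_grouped _ _),
    ← integral_sub sub_integrable (integrable_grouped _ _)]
  simp only [trace_lie_conjTranspose_mul_mul]
  simp only [trace_lie_mul_lie, map_mul, map_one, mul_one]

theorem haar_trace_sq_commutator_general [Nontrivial n] [IsProbabilityMeasure μ]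
    [μ.IsMulLeftInvariant] (H K X Y : Matrix n n ℂ) :
    ∫ U : unitaryGroup n ℂ,
        (⁅H, (U : Matrix n n ℂ)ᴴ * X * U⁆ * ⁅K, (U : Matrix n n ℂ)ᴴ * Y * U⁆).trace ∂μ =
      -(2 * Fintype.card n / (Fintype.card n ^ 2 - 1)) * traceCov H K * traceCov X Y := by
  rw [integral_trace_lie_mul_lie, haarTwirl_right_one, haarTwirl_right_one,
    haarTwirl_eq_depolarizing]
  have card_ne_zero : (Fintype.card n : ℂ) ≠ 0 := by simp
  simp only [trace_depolarizing_mul, trace_depolarizing, trace_mul_comm Y X, trace_mul_comm K H,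
    traceCov]
  field_simp
  ring

end HaarTwirl

/-- **Haar average of the squared commutator.** For a Haar-random unitary `U ∈ U(d)`,
`∫ Tr[[H, U† O U]²] dμ(U) = −(2d/(d²−1)) Δ(H) Δ(O)`. -/
theorem haar_trace_sq_commutator (d : ℕ) (hd : 2 ≤ d)
    [MeasurableSpace (Matrix.unitaryGroup (Fin d) ℂ)]
    [BorelSpace (Matrix.unitaryGroup (Fin d) ℂ)]
    (μ : Measure (Matrix.unitaryGroup (Fin d) ℂ))
    [μ.IsHaarMeasure] [IsProbabilityMeasure μ]
    (H O : Matrix (Fin d) (Fin d) ℂ) :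
    (∫ U : Matrix.unitaryGroup (Fin d) ℂ,
        (((H * ((U : Matrix (Fin d) (Fin d) ℂ)ᴴ * O * (U : Matrix (Fin d) (Fin d) ℂ)) -
              ((U : Matrix (Fin d) (Fin d) ℂ)ᴴ * O * (U : Matrix (Fin d) (Fin d) ℂ)) * H) *
            (H * ((U : Matrix (Fin d) (Fin d) ℂ)ᴴ * O * (U : Matrix (Fin d) (Fin d) ℂ)) -
              ((U : Matrix (Fin d) (Fin d) ℂ)ᴴ * O * (U : Matrix (Fin d) (Fin d) ℂ)) * H)).trace) ∂μ)
      = -(2 * d / ((d : ℂ) ^ 2 - 1)) * DeltaM d H * DeltaM d O := by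
  have : Nontrivial (Fin d) := Fin.nontrivial_iff_two_le.mpr hd
  simpa [traceCov, DeltaM, sq, Ring.lie_def] using haar_trace_sq_commutator_general μ H H O O
end

section
/- Let n and m be natural numbers with 2m ≤ n, set d = n − 2m + 1, and for an integer w define e(w) = (n² − n(4w+1) + 4w²)/2 ∈ ℚ. Then Σ_{w=m}^{n−m} e(w)² − (Σ_{w=m}^{n−m} e(w))² / d = (8/3) · C(d + 2, 5), as rational numbers. (This computes Δ(A_λ) = (8/3)·C(d_λ+2, 5) for the restriction to the irrep block λ = (n−m,m) of the two-body S_n-equivariant operator A = Σ_{k<j} χ_j χ_k, whose eigenvalue on a computational basis state of Hamming weight w is e(w) and whose admissible weights in block λ are w ∈ {m, …, n−m}.) -/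
/-!
Since `e w = ((n - 2 * w) ^ 2 - n) / 2`, invariance of the sum of squared deviations under
translation leaves a quarter of that of the squares `(n - 2 * w) ^ 2`. As `w` runs over the block,
`n - 2 * w` runs over the spin weights `d - 1, d - 3, …, -(d - 1)`, which are symmetric about `0`.
Passing from `d` to `d + 2` adds just the two extreme weights, and this gives the second and fourth
moments by two-step induction.
-/

open Finset

section SumSqDev

variable {ι K : Type*} [Field K]

/-- The sum of squared deviations of `f` from its mean over `s`, which is `#s` times the variance of
`f` under the uniform distribution on `s`. It is meaningful only when `#s` is nonzero in `K`. -/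
def sumSqDev (s : Finset ι) (f : ι → K) : K :=
  ∑ i ∈ s, f i ^ 2 - (∑ i ∈ s, f i) ^ 2 / #s

theorem sumSqDev_mul_add {s : Finset ι} (hs : (#s : K) ≠ 0) (f : ι → K) (a b : K) :
    sumSqDev s (fun i ↦ a * f i + b) = a ^ 2 * sumSqDev s f := by
  have sum_affine : ∑ i ∈ s, (a * f i + b) = a * ∑ i ∈ s, f i + #s * b := by
    rw [sum_add_distrib, ← mul_sum, sum_const, nsmul_eq_mul]
  have sum_affine_sq : ∑ i ∈ s, (a * f i + b) ^ 2 =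
      a ^ 2 * ∑ i ∈ s, f i ^ 2 + 2 * a * b * ∑ i ∈ s, f i + #s * b ^ 2 := by
    rw [mul_sum, mul_sum, ← nsmul_eq_mul, ← sum_const, ← sum_add_distrib, ← sum_add_distrib]
    exact sum_congr rfl fun i _ ↦ by ring
  rw [sumSqDev, sumSqDev, sum_affine, sum_affine_sq]
  field_simp
  ring

end SumSqDev

section SpinWeight

/-- The weights `N - 1, N - 3, …, -(N - 1)` of the `N`-dimensional irreducible representation of
`sl₂`, indexed by `i < N` in decreasing order; the subtraction takes place in `R`. -/
def spinWeight (R : Type*) [CommRing R] (N i : ℕ) : R :=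
  N - 1 - 2 * i

variable {R : Type*} [CommRing R]

theorem sum_spinWeight_add_two {M : Type*} [AddCommMonoid M] (g : R → M) (N : ℕ) :
    ∑ i ∈ range (N + 2), g (spinWeight R (N + 2) i) =
      ∑ i ∈ range N, g (spinWeight R N i) + g (N + 1) + g (-(N + 1)) := by
  have weight_top : spinWeight R (N + 2) 0 = N + 1 := by
    simp only [spinWeight]; push_cast; ring
  have weight_bot : spinWeight R (N + 2) (N + 1) = -(N + 1) := by
    simp only [spinWeight]; push_cast; ring
  have weight_succ (i : ℕ) : spinWeight R (N + 2) (i + 1) = spinWeight R N i := by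
    simp only [spinWeight]; push_cast; ring
  rw [sum_range_succ, sum_range_succ', weight_top, weight_bot]
  simp only [weight_succ]

theorem three_mul_sum_spinWeight_sq (N : ℕ) :
    3 * ∑ i ∈ range N, spinWeight R N i ^ 2 = N * (N ^ 2 - 1) := by
  induction N using Nat.twoStepInduction with
  | zero => simp
  | one => simp [spinWeight]
  | more N ih _ =>
    rw [sum_spinWeight_add_two (· ^ 2), mul_add, mul_add, ih]
    push_cast
    ring

theorem fifteen_mul_sum_spinWeight_pow_four (N : ℕ) :
    15 * ∑ i ∈ range N, spinWeight R N i ^ 4 = N * (N ^ 2 - 1) * (3 * N ^ 2 - 7) := by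
  induction N using Nat.twoStepInduction with
  | zero => simp
  | one => simp [spinWeight]
  | more N ih _ =>
    rw [sum_spinWeight_add_two (· ^ 4), mul_add, mul_add, ih]
    push_cast
    ring

theorem sum_Icc_sub_two_mul {M : Type*} [AddCommMonoid M] {m n : ℕ} (h : 2 * m ≤ n) (g : R → M) :
    ∑ w ∈ Icc m (n - m), g (n - 2 * w) =
      ∑ i ∈ range (n - 2 * m + 1), g (spinWeight R (n - 2 * m + 1) i) := by
  obtain ⟨k, rfl⟩ := Nat.exists_eq_add_of_le h
  have block_eq_Ico : Icc m (2 * m + k - m) = Ico m (m + (k + 1)) := by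
    ext w; simp only [mem_Icc, mem_Ico]; lia
  rw [block_eq_Ico, sum_Ico_eq_sum_range, Nat.add_sub_cancel_left, Nat.add_sub_cancel_left]
  refine sum_congr rfl fun i _ ↦ congrArg g ?_
  simp only [spinWeight]
  push_cast
  ring

end SpinWeight

section CharZero

variable {K : Type*} [Field K] [CharZero K]

theorem cast_choose_add_two_five (N : ℕ) :
    ((N + 2).choose 5 : K) = N * (N ^ 2 - 1) * (N ^ 2 - 4) / 120 := by
  rw [Nat.cast_choose_eq_descPochhammer_div, descPochhammer_eval_eq_prod_range]
  simp only [prod_range_succ, prod_range_zero, Nat.factorial]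
  push_cast
  ring

theorem sumSqDev_spinWeight_sq (N : ℕ) :
    sumSqDev (range N) (fun i ↦ spinWeight K N i ^ 2) = 32 / 3 * ((N + 2).choose 5 : K) := by
  have second_moment : ∑ i ∈ range N, spinWeight K N i ^ 2 = N * (N ^ 2 - 1) / 3 :=
    eq_div_of_mul_eq three_ne_zero ((mul_comm _ _).trans (three_mul_sum_spinWeight_sq N))
  have fourth_moment :
      ∑ i ∈ range N, spinWeight K N i ^ 4 = N * (N ^ 2 - 1) * (3 * N ^ 2 - 7) / 15 :=
    eq_div_of_mul_eq (by norm_num) ((mul_comm _ _).trans (fifteen_mul_sum_spinWeight_pow_four N))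
  simp only [sumSqDev, ← pow_mul, Nat.reduceMul, card_range]
  rw [second_moment, fourth_moment, cast_choose_add_two_five]
  rcases eq_or_ne (N : K) 0 with hN | hN
  · simp [hN]
  · field_simp
    ring

theorem sumSqDev_Icc_sub_two_mul_sq {m n : ℕ} (h : 2 * m ≤ n) :
    sumSqDev (Icc m (n - m)) (fun w ↦ ((n : K) - 2 * w) ^ 2) =
      32 / 3 * ((n - 2 * m + 1 + 2).choose 5 : K) := by
  have card_block : #(Icc m (n - m)) = n - 2 * m + 1 := by rw [Nat.card_Icc]; lia
  rw [← sumSqDev_spinWeight_sq, sumSqDev, sumSqDev, card_block, card_range,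
    sum_Icc_sub_two_mul h (· ^ 2), sum_Icc_sub_two_mul h fun x : K ↦ (x ^ 2) ^ 2]

end CharZero

/-- **Two-body block variance.** With `d = n − 2m + 1` and
`e(w) = (n² − n(4w+1) + 4w²)/2`, one has
`Σ_{w=m}^{n−m} e(w)² − (Σ_{w=m}^{n−m} e(w))²/d = (8/3)·C(d+2, 5)`. -/
theorem two_body_block_variance (n m : ℕ) (h : 2 * m ≤ n) (d : ℕ) (hd : d = n - 2 * m + 1)
    (e : ℕ → ℚ) (he : ∀ w : ℕ, e w = ((n : ℚ) ^ 2 - n * (4 * w + 1) + 4 * w ^ 2) / 2) :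
    (∑ w ∈ Finset.Icc m (n - m), e w ^ 2) -
        (∑ w ∈ Finset.Icc m (n - m), e w) ^ 2 / (d : ℚ)
      = (8 / 3) * ((d + 2).choose 5 : ℚ) := by
  have card_block : #(Icc m (n - m)) = d := by rw [Nat.card_Icc]; lia
  have card_ne_zero : (#(Icc m (n - m)) : ℚ) ≠ 0 := by
    rw [card_block, hd]; exact Nat.cast_ne_zero.mpr (Nat.succ_ne_zero _)
  have e_eq : e = fun w : ℕ ↦ 1 / 2 * ((n : ℚ) - 2 * w) ^ 2 + -n / 2 := by
    funext w; rw [he]; ring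
  calc
    _ = sumSqDev (Icc m (n - m)) e := by rw [sumSqDev, card_block]
    _ = (1 / 2) ^ 2 * (32 / 3 * ((d + 2).choose 5 : ℚ)) := by
      rw [e_eq, sumSqDev_mul_add card_ne_zero, sumSqDev_Icc_sub_two_mul_sq h, hd]
    _ = (8 / 3) * ((d + 2).choose 5 : ℚ) := by ring
end

section
/- Fix n ≥ 1 and let 0 < ε ≤ 1. There exists a finite set K of 2^n × 2^n complex matrices such that: (i) every V ∈ K is unitary and satisfies V·R(π) = R(π)·V for all permutations π ∈ S_n; (ii) the cardinality of K is at most (6/ε)^{2·C(n+3,3)}; and (iii) for every 2^n × 2^n unitary matrix U satisfying U·R(π) = R(π)·U for all π ∈ S_n, there exists V ∈ K with ‖U − V‖ ≤ ε, where ‖·‖ is the operator norm induced by the Euclidean norm on ℂ^{2^n}. That is, the ε-covering number of the set of S_n-equivariant unitaries in operator norm is at most (6/ε)^{2·Te_{n+1}}. -/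
open Matrix

/-- The spectral norm (operator norm induced by the Euclidean norm) of a matrix. -/
noncomputable def specNorm (n : ℕ) (A : Matrix (Fin n → Fin 2) (Fin n → Fin 2) ℂ) : ℝ :=
  ‖Matrix.toEuclideanCLM (𝕜 := ℂ) A‖

open MeasureTheory Metric Module
open scoped ENNReal NNReal Matrix.Norms.L2Operator

/-!
A maximal `ε`-separated subset of a set `S` is an `ε`-cover of `S`, and if `S` lies in a ball of
radius `r` of a real normed space of dimension `d`, comparing the volume of the disjoint balls of
radius `ε / 2` around its points with that of the ball of radius `r + ε / 2` shows that it has at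
most `(1 + 2 r / ε) ^ d` points. The unitaries commuting with a permutation representation on `X`
lie in the unit ball of its commutant. A matrix is in the commutant iff its entries are constant on
the orbits of `X × X`, so the real dimension of the commutant is twice the number of these orbits.
For `n` qubits a pair of bitstrings is a word of length `n` in the four letters `Fin 2 × Fin 2`, and
the orbit of a word under permutations of its positions is the multiset of its letters, so that
there are `C(n + 3, 3)` orbits.
-/

section VolumetricBound

variable {E : Type*} [NormedAddCommGroup E] [NormedSpace ℝ E] {r ε : ℝ≥0}

theorem card_le_of_isSeparated_of_subset_closedBall [FiniteDimensional ℝ E] (hε : 0 < ε) {x : E}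
    {s : Finset E} (hs : (s : Set E) ⊆ closedBall x r) (hsep : IsSeparated ε (s : Set E)) :
    (s.card : ℝ) ≤ (1 + 2 * r / ε) ^ finrank ℝ E := by
  borelize E
  let μ : Measure E := Measure.addHaar
  have hε' : (0 : ℝ) < ε := hε
  have hdisj : (s : Set E).PairwiseDisjoint fun y => ball y (ε / 2 : ℝ) := by
    intro y hy z hz hyz
    have hlt : (ε : ℝ) < dist y z := by
      have h : (ε : ℝ≥0∞) < edist y z := hsep hy hz hyz
      rw [edist_nndist] at h
      exact_mod_cast h
    exact ball_disjoint_ball (by linarith)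
  have hsub : ⋃ y ∈ s, ball y (ε / 2 : ℝ) ⊆ ball x (r + ε / 2) :=
    Set.iUnion₂_subset fun y hy => ball_subset_ball' (by linarith [mem_closedBall.1 (hs hy)])
  have hscale (y : E) {ρ : ℝ} (hρ : 0 < ρ) :
      μ.real (ball y ρ) = ρ ^ finrank ℝ E * μ.real (ball 0 1) := by
    rw [measureReal_def, μ.addHaar_ball_of_pos y hρ, ENNReal.toReal_mul,
      ENNReal.toReal_ofReal (by positivity), measureReal_def]
  have hvol : s.card * (ε / 2 : ℝ) ^ finrank ℝ E * μ.real (ball 0 1) ≤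
      (r + ε / 2 : ℝ) ^ finrank ℝ E * μ.real (ball 0 1) := calc
    _ = μ.real (⋃ y ∈ s, ball y (ε / 2 : ℝ)) := by
      rw [measureReal_biUnion_finset hdisj fun _ _ => measurableSet_ball]
      simp only [hscale _ (half_pos hε'), Finset.sum_const, nsmul_eq_mul, mul_assoc]
    _ ≤ μ.real (ball x (r + ε / 2)) := measureReal_mono hsub measure_ball_lt_top.ne
    _ = _ := hscale x (by positivity)
  have hball : 0 < μ.real (ball (0 : E) 1) :=
    ENNReal.toReal_pos (measure_ball_pos μ 0 one_pos).ne' measure_ball_lt_top.ne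
  calc
    (s.card : ℝ) ≤ (r + ε / 2 : ℝ) ^ finrank ℝ E / (ε / 2) ^ finrank ℝ E :=
      (le_div_iff₀ (by positivity)).2 (le_of_mul_le_mul_right hvol hball)
    _ = (1 + 2 * r / ε) ^ finrank ℝ E := by
      rw [← div_pow]
      congr 1
      field_simp
      ring

theorem packingNumber_le_of_subset_closedBall [FiniteDimensional ℝ E] (hε : 0 < ε) {x : E}
    {S : Set E} (hS : S ⊆ closedBall x r) :
    packingNumber ε S ≤ (⌊(1 + 2 * r / ε : ℝ) ^ finrank ℝ E⌋₊ : ℕ∞) := by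
  refine iSup₂_le fun C hCS => iSup_le fun hsep => ?_
  by_contra! hlt
  obtain ⟨T, hTC, hT⟩ := Set.exists_subset_encard_eq (Order.add_one_le_of_lt hlt)
  have hTfin : T.Finite := Set.finite_of_encard_eq_coe (by exact_mod_cast hT)
  lift T to Finset E using hTfin
  have hcard : T.card = ⌊(1 + 2 * r / ε : ℝ) ^ finrank ℝ E⌋₊ + 1 := by
    rw [Set.encard_coe_eq_coe_finsetCard] at hT
    exact_mod_cast hT
  have hle := Nat.le_floor <| card_le_of_isSeparated_of_subset_closedBall hε
    ((hTC.trans hCS).trans hS) (hsep.subset hTC)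
  omega

theorem exists_finset_isCover_of_subset_closedBall [FiniteDimensional ℝ E] (hε : 0 < ε) {x : E}
    {S : Set E} (hS : S ⊆ closedBall x r) :
    ∃ K : Finset E, ↑K ⊆ S ∧ IsCover ε S K ∧ (K.card : ℝ) ≤ (1 + 2 * r / ε) ^ finrank ℝ E := by
  have hcov := (coveringNumber_le_packingNumber ε S).trans
    (packingNumber_le_of_subset_closedBall hε hS)
  obtain ⟨K, hKS, hKfin, hcover, hcard⟩ :=
    exists_set_encard_eq_coveringNumber (ne_top_of_le_ne_top (ENat.natCast_ne_top _) hcov)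
  lift K to Finset E using hKfin
  rw [← hcard, Set.encard_coe_eq_coe_finsetCard, Nat.cast_le] at hcov
  exact ⟨K, hKS, hcover, (Nat.le_floor_iff (by positivity)).1 hcov⟩

theorem exists_finset_isCover_of_subset_submodule (W : Submodule ℝ E) [FiniteDimensional ℝ W]
    (hε : 0 < ε) {S : Set E} (hSW : S ⊆ W) (hS : S ⊆ closedBall 0 r) :
    ∃ K : Finset E, ↑K ⊆ S ∧ IsCover ε S K ∧ (K.card : ℝ) ≤ (1 + 2 * r / ε) ^ finrank ℝ W := by
  obtain ⟨K, hKS, hcover, hcard⟩ := exists_finset_isCover_of_subset_closedBall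
    (E := W) (r := r) (x := 0) (S := (↑) ⁻¹' S) hε fun w hw => by simpa using hS hw
  refine ⟨K.map (.subtype _), ?_, ?_, by rwa [Finset.card_map]⟩
  · simpa using hKS
  · have himage : ((↑) '' ((↑) ⁻¹' S : Set W) : Set E) = S :=
      Subtype.image_preimage_coe (W : Set E) S |>.trans (Set.inter_eq_right.2 hSW)
    rw [Finset.coe_map, ← himage]
    exact (isometry_subtype_coe.isCover_image_iff _).2 hcover

end VolumetricBound

theorem exists_finset_isCover_unitary_inter {A : Type*} [NormedRing A] [StarRing A] [CStarRing A]
    [NormedAlgebra ℂ A] (W : Submodule ℂ A) [FiniteDimensional ℂ W] {ε : ℝ≥0} (hε : 0 < ε) :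
    ∃ K : Finset A, ↑K ⊆ (unitary A ∩ W : Set A) ∧ IsCover ε (unitary A ∩ W : Set A) K ∧
      (K.card : ℝ) ≤ (1 + 2 / ε) ^ (2 * finrank ℂ W) := by
  have : FiniteDimensional ℝ (W.restrictScalars ℝ) := FiniteDimensional.complexToReal W
  have hball : (unitary A ∩ W : Set A) ⊆ closedBall 0 (1 : ℝ≥0) := fun U hU => by
    nontriviality A
    simpa using (CStarRing.norm_of_mem_unitary hU.1).le
  have hdim : finrank ℝ (W.restrictScalars ℝ) = 2 * finrank ℂ W := finrank_real_of_complex W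
  simpa [hdim] using exists_finset_isCover_of_subset_submodule
    (W.restrictScalars ℝ) hε Set.inter_subset_right hball

section PermutationAction

variable {G X R : Type*} [Group G] [MulAction G X] [DecidableEq X]

variable (X R) in
/-- The matrix of `g : G` in the permutation representation on functions `X → R` of an action of
`G` on `X`: it sends the basis vector at `x` to the one at `g • x`. For `Equiv.Perm (Fin n)` acting
on `Fin n → Fin 2` by `arrowAction` it is `qubitRep`. -/
def actionMatrix [Zero R] [One R] (g : G) : Matrix X X R :=
  Matrix.of fun x y => if x = g • y then 1 else 0

theorem actionMatrix_eq_permMatrix [Zero R] [One R] (g : G) :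
    actionMatrix X R g = (MulAction.toPerm g⁻¹ : Equiv.Perm X).permMatrix R := by
  ext x y
  simp [actionMatrix, PEquiv.toMatrix_apply, eq_inv_smul_iff, eq_comm]

variable [Fintype X]

theorem mul_actionMatrix_eq_iff [NonAssocSemiring R] {A : Matrix X X R} {g : G} :
    A * actionMatrix X R g = actionMatrix X R g * A ↔ ∀ x y, A (g • x) (g • y) = A x y := by
  rw [actionMatrix_eq_permMatrix, PEquiv.mul_toMatrix_toPEquiv, PEquiv.toMatrix_toPEquiv_mul,
    ← Matrix.ext_iff]
  simp only [submatrix_apply]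
  exact ((MulAction.toPerm g).forall_congr fun x => by simp).symm

variable (G X R) in
/-- The algebra of matrices commuting with the permutation representation of `G` on `X → R`. -/
def actionCommutant [CommSemiring R] : Subalgebra R (Matrix X X R) :=
  Subalgebra.centralizer R (Set.range (actionMatrix X R : G → Matrix X X R))

theorem mem_actionCommutant_iff [CommSemiring R] {A : Matrix X X R} :
    A ∈ actionCommutant G X R ↔ ∀ g : G, A * actionMatrix X R g = actionMatrix X R g * A := by
  simp only [actionCommutant, Subalgebra.mem_centralizer_iff, Set.forall_mem_range, eq_comm]

variable (G X R) in
/-- A matrix commutes with a permutation representation iff its entries are constant on the orbits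
of pairs of indices. -/
def actionCommutantEquiv [CommSemiring R] :
    actionCommutant G X R ≃ₗ[R] (MulAction.orbitRel.Quotient G (X × X) → R) where
  toFun A := Quotient.lift (fun p => A.1 p.1 p.2) <| by
    rintro _ p ⟨g, rfl⟩
    exact mul_actionMatrix_eq_iff.1 (mem_actionCommutant_iff.1 A.2 g) p.1 p.2
  invFun c := ⟨Matrix.of fun x y => c (Quotient.mk _ (x, y)), mem_actionCommutant_iff.2 fun g =>
    mul_actionMatrix_eq_iff.2 fun x y => congrArg c (Quotient.sound ⟨g, rfl⟩)⟩
  left_inv _ := rfl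
  right_inv c := by
    ext ⟨p⟩
    rfl
  map_add' A B := by
    ext ⟨p⟩
    rfl
  map_smul' c A := by
    ext ⟨p⟩
    rfl

theorem finrank_actionCommutant [CommSemiring R] [StrongRankCondition R] :
    finrank R (actionCommutant G X R) = Nat.card (MulAction.orbitRel.Quotient G (X × X)) := by
  have := Fintype.ofFinite (MulAction.orbitRel.Quotient G (X × X))
  rw [(actionCommutantEquiv G X R).finrank_eq, finrank_fintype_fun_eq_card,
    Nat.card_eq_fintype_card]

end PermutationAction

attribute [local instance] arrowAction

section TupleOrbits

variable {ι α : Type*} [Fintype ι]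

theorem orbitRel_perm_arrow_iff {f g : ι → α} :
    MulAction.orbitRel (Equiv.Perm ι) (ι → α) f g ↔
      Finset.univ.val.map f = Finset.univ.val.map g := by
  classical
  constructor
  · rintro ⟨σ, rfl⟩
    calc Finset.univ.val.map (g ∘ ⇑σ⁻¹)
        = (Finset.univ.val.map ⇑σ⁻¹).map g := (Multiset.map_map ..).symm
      _ = Finset.univ.val.map g := by rw [Multiset.map_univ_val_equiv]
  · intro h
    have hfiber (a : α) : Fintype.card {i // f i = a} = Fintype.card {i // g i = a} := by
      have hcount := congrArg (Multiset.count a) h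
      simpa [Multiset.count_map, Fintype.card_subtype, Finset.card_def, eq_comm] using hcount
    let σ : Equiv.Perm ι := Equiv.ofFiberEquiv fun a => Fintype.equivOfCardEq (hfiber a)
    have hσ (i : ι) : g (σ i) = f i := Equiv.ofFiberEquiv_map _ i
    exact ⟨σ⁻¹, funext hσ⟩

/-- The orbit of a tuple under permutations of its positions, encoded as the multiset of its
entries. -/
noncomputable def tupleOrbitsEquivSym (ι α : Type*) [Fintype ι] :
    MulAction.orbitRel.Quotient (Equiv.Perm ι) (ι → α) ≃ Sym α (Fintype.card ι) :=
  Equiv.ofBijective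
    (Quotient.lift (fun f => ⟨Finset.univ.val.map f, by simp⟩) fun f g h =>
      Subtype.ext (orbitRel_perm_arrow_iff.1 h)) <| by
    constructor
    · rintro ⟨f⟩ ⟨g⟩ h
      exact Quotient.sound (orbitRel_perm_arrow_iff.2 (congrArg Subtype.val h))
    · rintro ⟨⟨l⟩, hl⟩
      let e : ι ≃ Fin l.length := Fintype.equivFinOfCardEq hl.symm
      refine ⟨Quotient.mk _ (l.get ∘ e), Subtype.ext ?_⟩
      calc Finset.univ.val.map (l.get ∘ e)
          = (Finset.univ.val.map e).map l.get := (Multiset.map_map ..).symm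
        _ = l := by rw [Multiset.map_univ_val_equiv, Fin.univ_val_map, List.ofFn_get]

theorem card_tuplePairOrbits [Fintype α] :
    Nat.card (MulAction.orbitRel.Quotient (Equiv.Perm ι) ((ι → α) × (ι → α))) =
      (Fintype.card α ^ 2).multichoose (Fintype.card ι) := by
  classical
  have hzip := Nat.card_congr <| Quotient.congr
    (ra := MulAction.orbitRel (Equiv.Perm ι) ((ι → α) × (ι → α)))
    (rb := MulAction.orbitRel (Equiv.Perm ι) (ι → α × α))
    (Equiv.arrowProdEquivProdArrow ι (fun _ => α) (fun _ => α)).symm fun _ _ =>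
      exists_congr fun _ => (Equiv.arrowProdEquivProdArrow ..).symm.apply_eq_iff_eq.symm
  rw [MulAction.orbitRel.Quotient, hzip, Nat.card_congr (tupleOrbitsEquivSym ι (α × α)),
    Nat.card_eq_fintype_card, Sym.card_sym_eq_multichoose, Fintype.card_prod, sq]

end TupleOrbits

theorem card_qubitPairOrbits (n : ℕ) :
    Nat.card (MulAction.orbitRel.Quotient (Equiv.Perm (Fin n))
      ((Fin n → Fin 2) × (Fin n → Fin 2))) = (n + 3).choose 3 := by
  rw [card_tuplePairOrbits, Fintype.card_fin, Fintype.card_fin, Nat.multichoose_eq,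
    show 2 ^ 2 + n - 1 = n + 3 by lia, Nat.choose_symm_add]

theorem covering_number_equivariant_unitaries_general {G X : Type*} [Group G] [MulAction G X]
    [Fintype X] [DecidableEq X] {ε : ℝ} (hε : 0 < ε) :
    ∃ K : Finset (Matrix X X ℂ),
      (∀ V ∈ K, V ∈ Matrix.unitaryGroup X ℂ ∧
        ∀ g : G, V * actionMatrix X ℂ g = actionMatrix X ℂ g * V) ∧
      (K.card : ℝ) ≤ (1 + 2 / ε) ^ (2 * Nat.card (MulAction.orbitRel.Quotient G (X × X))) ∧
      (∀ U : Matrix X X ℂ, U ∈ Matrix.unitaryGroup X ℂ →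
        (∀ g : G, U * actionMatrix X ℂ g = actionMatrix X ℂ g * U) →
        ∃ V ∈ K, ‖U - V‖ ≤ ε) := by
  lift ε to ℝ≥0 using hε.le
  obtain ⟨K, hK, hcover, hcard⟩ := exists_finset_isCover_unitary_inter
    (Subalgebra.toSubmodule (actionCommutant G X ℂ)) (NNReal.coe_pos.1 hε)
  refine ⟨K, fun V hV => ⟨(hK hV).1, mem_actionCommutant_iff.1 (hK hV).2⟩, ?_, ?_⟩
  · rwa [← finrank_actionCommutant (R := ℂ)]
  · intro U hU hUG
    obtain ⟨V, hV, hUV⟩ := hcover ⟨hU, mem_actionCommutant_iff.2 hUG⟩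
    have hdist : edist U V ≤ (ε : ℝ≥0∞) := hUV
    rw [edist_nndist, nndist_eq_nnnorm] at hdist
    exact ⟨V, hV, by exact_mod_cast hdist⟩

theorem one_add_two_div_le_six_div {ε : ℝ} (hε0 : 0 < ε) (hε4 : ε ≤ 4) : 1 + 2 / ε ≤ 6 / ε := by
  rw [le_div_iff₀ hε0, add_mul, div_mul_cancel₀ _ hε0.ne']
  linarith

/-- **Covering number of `S_n`-equivariant unitaries.** For `0 < ε ≤ 1`, the set of
`S_n`-equivariant `2^n × 2^n` unitaries admits an `ε`-cover in spectral norm of cardinality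
at most `(6/ε)^{2·C(n+3,3)}`. -/
theorem covering_number_equivariant_unitaries (n : ℕ) (hn : 1 ≤ n) (ε : ℝ)
    (hε0 : 0 < ε) (hε1 : ε ≤ 1) :
    ∃ K : Finset (Matrix (Fin n → Fin 2) (Fin n → Fin 2) ℂ),
      (∀ V ∈ K, V ∈ Matrix.unitaryGroup (Fin n → Fin 2) ℂ ∧
        ∀ π : Equiv.Perm (Fin n), V * qubitRep n π = qubitRep n π * V) ∧
      (K.card : ℝ) ≤ (6 / ε) ^ (2 * (n + 3).choose 3) ∧
      (∀ U : Matrix (Fin n → Fin 2) (Fin n → Fin 2) ℂ,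
        U ∈ Matrix.unitaryGroup (Fin n → Fin 2) ℂ →
        (∀ π : Equiv.Perm (Fin n), U * qubitRep n π = qubitRep n π * U) →
        ∃ V ∈ K, specNorm n (U - V) ≤ ε) := by
  have hbase : 1 + 2 / ε ≤ 6 / ε := one_add_two_div_le_six_div hε0 (by linarith)
  obtain ⟨K, hK, hcard, hcover⟩ :=
    covering_number_equivariant_unitaries_general (G := Equiv.Perm (Fin n)) (X := Fin n → Fin 2) hε0
  exact ⟨K, hK, (card_qubitPairOrbits n ▸ hcard).trans (by gcongr), hcover⟩
end

section
/- Fix n ≥ 1, a Hermitian 2^n × 2^n matrix O satisfying O·R(π) = R(π)·O for all permutations π ∈ S_n, and a real threshold b. Suppose a finite set S of 2^n × 2^n density matrices (Hermitian, positive semidefinite, trace one) is shattered by the classifier family {ρ ↦ (Tr[U ρ U† O] ≥ b)}, where U ranges over 2^n × 2^n unitary matrices commuting with R(π) for all π ∈ S_n; that is, for every subset T ⊆ S there exists such a unitary U with: for all ρ ∈ S, Tr[U ρ U† O] ≥ b if and only if ρ ∈ T. Then the cardinality of S is at most Te_{n+1} = C(n+3, 3). In particular, the VC dimension of classifiers built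 from S_n-equivariant QNNs and S_n-equivariant measurements is at most C(n+3,3) ∈ Θ(n³). -/
open Matrix
open scoped ComplexOrder

/-!
The expectations `Re Tr[U ρ U† O] = Re Tr[ρ (U† O U)]` are real-linear in the observable `U† O U`,
which is a Hermitian element of the commutant of the representation. The commutant contains the
identity and `Tr ρ = 1`, so the threshold `b` is absorbed by subtracting `b • 1` from the
observable. By Dudley's argument the half-spaces given by a `d`-dimensional real space of
functionals shatter at most `d` points. The Hermitian elements of a complex star-algebra have real
dimension equal to its complex dimension, and a matrix in the commutant is constant on the orbits
of pairs of bitstrings, which are classified by multisets of `n` elements of `{0, 1}²`.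
-/

open Module

section Shattering

section Functions

variable {R α β : Type*} [CommRing R] [LinearOrder R] [IsStrictOrderedRing R]
  {φ : α → β → R} {S : Finset α}

theorem nonneg_of_sum_smul_eq_zero_of_shattered
    (hS : ∀ T ⊆ S, ∃ v, ∀ x ∈ S, 0 ≤ φ x v ↔ x ∈ T) {c : α → R}
    (hc : ∑ x ∈ S, c x • φ x = 0) {x : α} (hx : x ∈ S) : 0 ≤ c x := by
  obtain ⟨v, hv⟩ := hS (S.filter (0 ≤ c ·)) (S.filter_subset _)
  have sign_iff : ∀ y ∈ S, 0 ≤ φ y v ↔ 0 ≤ c y := fun y hy ↦ by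
    rw [hv y hy, Finset.mem_filter, and_iff_right hy]
  have term_pos : ∀ y ∈ S, c y < 0 → 0 < c y * φ y v := fun y hy hneg ↦
    mul_pos_of_neg_of_neg hneg (not_le.1 ((sign_iff y hy).not.2 hneg.not_ge))
  have term_nonneg : ∀ y ∈ S, 0 ≤ c y * φ y v := fun y hy ↦ by
    rcases le_or_gt 0 (c y) with hpos | hneg
    · exact mul_nonneg hpos ((sign_iff y hy).2 hpos)
    · exact (term_pos y hy hneg).le
  have sum_eq_zero : ∑ y ∈ S, c y * φ y v = 0 := by
    simpa using congrFun hc v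
  by_contra! hneg
  exact (term_pos x hx hneg).ne'
    ((Finset.sum_eq_zero_iff_of_nonneg term_nonneg).1 sum_eq_zero x hx)

theorem linearIndepOn_of_shattered (hS : ∀ T ⊆ S, ∃ v, ∀ x ∈ S, 0 ≤ φ x v ↔ x ∈ T) :
    LinearIndepOn R φ (S : Set α) := by
  refine linearIndepOn_finset_iff.2 fun c hc x hx ↦ le_antisymm ?_ ?_
  · have neg_relation : ∑ y ∈ S, (-c) y • φ y = 0 := by simp [hc]
    exact neg_nonneg.1 (nonneg_of_sum_smul_eq_zero_of_shattered hS neg_relation hx)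
  · exact nonneg_of_sum_smul_eq_zero_of_shattered hS hc hx

end Functions

theorem card_le_finrank_of_shattered {K α V : Type*} [Field K] [LinearOrder K]
    [IsStrictOrderedRing K] [AddCommGroup V] [Module K V] [FiniteDimensional K V]
    {φ : α → Dual K V} {S : Finset α} (hS : ∀ T ⊆ S, ∃ v, ∀ x ∈ S, 0 ≤ φ x v ↔ x ∈ T) :
    S.card ≤ finrank K V := by
  have coe_indep : LinearIndepOn K (fun x ↦ ⇑(φ x)) (S : Set α) := linearIndepOn_of_shattered hS
  have indep : LinearIndepOn K φ (S : Set α) :=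
    LinearIndependent.of_comp (LinearMap.ltoFun K V K K) coe_indep
  simpa [Subspace.dual_finrank_eq] using LinearIndependent.fintype_card_le_finrank indep

end Shattering

section SelfAdjoint

variable (A : Type*) [AddCommGroup A] [Module ℂ A] [StarAddMonoid A] [StarModule ℂ A]

theorem bijective_negISMul : Function.Bijective (skewAdjoint.negISMul (A := A)) := by
  refine ⟨fun a b h ↦ Subtype.ext ?_, fun a ↦ ⟨⟨Complex.I • (a : A), ?_⟩, Subtype.ext ?_⟩⟩
  · rw [← skewAdjoint.I_smul_neg_I a, h, skewAdjoint.I_smul_neg_I b]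
  · exact Complex.I_smul_mem_skewAdjoint_iff_isSelfAdjoint.2 a.2
  · simp [smul_smul]

variable [FiniteDimensional ℂ A]

instance finiteDimensional_selfAdjoint : FiniteDimensional ℝ (selfAdjoint A) :=
  have : FiniteDimensional ℝ A := FiniteDimensional.complexToReal A
  inferInstanceAs (FiniteDimensional ℝ (selfAdjoint.submodule ℝ A))

theorem finrank_selfAdjoint : finrank ℝ (selfAdjoint A) = finrank ℂ A := by
  let e : skewAdjoint A ≃ₗ[ℝ] selfAdjoint A := .ofBijective _ (bijective_negISMul A)
  have : FiniteDimensional ℝ (skewAdjoint A) := .equiv e.symm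
  have two_mul_finrank : 2 * finrank ℂ A = 2 * finrank ℝ (selfAdjoint A) := by
    rw [← finrank_real_of_complex, (StarModule.decomposeProdAdjoint ℝ A).finrank_eq,
      finrank_prod, e.finrank_eq, two_mul]
  lia

end SelfAdjoint

section Observables

variable {m : Type*} [Fintype m] [DecidableEq m] {𝒜 : StarSubalgebra ℂ (Matrix m m ℂ)}
  {O : Matrix m m ℂ}

variable (𝒜) in
/-- The expectation value `H ↦ Re Tr[ρ H]` of the Hermitian observables `H` in `𝒜`, as a real
functional; the density matrix `ρ` need not lie in `𝒜`. -/
noncomputable def expectation (ρ : Matrix m m ℂ) : Dual ℝ (selfAdjoint 𝒜) where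
  toFun H := (ρ * (H : 𝒜)).trace.re
  map_add' H K := by simp [mul_add]
  map_smul' r H := by simp

theorem exists_expectation_eq_sub (hO : O ∈ 𝒜) (hO_herm : O.IsHermitian) {U : Matrix m m ℂ}
    (hU : U ∈ 𝒜) (b : ℝ) : ∃ H : selfAdjoint 𝒜, ∀ ρ : Matrix m m ℂ, ρ.trace = 1 →
      expectation 𝒜 ρ H = (U * ρ * Uᴴ * O).trace.re - b := by
  let H : 𝒜 := star ⟨U, hU⟩ * ⟨O, hO⟩ * ⟨U, hU⟩ - algebraMap ℂ 𝒜 b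
  have H_selfAdjoint : IsSelfAdjoint H := by
    have hO' : IsSelfAdjoint (⟨O, hO⟩ : 𝒜) := Subtype.ext hO_herm
    have hb : IsSelfAdjoint (b : ℂ) := Complex.conj_ofReal b
    exact (hO'.conjugate' _).sub (hb.algebraMap 𝒜)
  have coe_H : (H : Matrix m m ℂ) = Uᴴ * O * U - (b : ℂ) • 1 := by
    simp [H, Algebra.algebraMap_eq_smul_one, star_eq_conjTranspose]
  refine ⟨⟨H, H_selfAdjoint⟩, fun ρ hρ ↦ ?_⟩
  have trace_cycle : (ρ * (Uᴴ * O * U)).trace = (U * ρ * Uᴴ * O).trace := by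
    rw [← mul_assoc, trace_mul_comm]
    simp only [mul_assoc]
  calc expectation 𝒜 ρ ⟨H, H_selfAdjoint⟩
      = (ρ * (Uᴴ * O * U - (b : ℂ) • 1)).trace.re := by rw [← coe_H]; rfl
    _ = (U * ρ * Uᴴ * O).trace.re - b := by simp [mul_sub, trace_cycle, hρ]

theorem card_le_finrank_of_shattered_by_expectations (hO : O ∈ 𝒜) (hO_herm : O.IsHermitian)
    (b : ℝ) {S : Finset (Matrix m m ℂ)} (hS : ∀ ρ ∈ S, ρ.trace = 1)
    (hshatter : ∀ T ⊆ S, ∃ U ∈ 𝒜, ∀ ρ ∈ S, b ≤ (U * ρ * Uᴴ * O).trace.re ↔ ρ ∈ T) :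
    S.card ≤ finrank ℂ 𝒜 := by
  have : FiniteDimensional ℂ 𝒜 :=
    FiniteDimensional.finiteDimensional_submodule 𝒜.toSubalgebra.toSubmodule
  rw [← finrank_selfAdjoint]
  refine card_le_finrank_of_shattered (φ := expectation 𝒜) fun T hT ↦ ?_
  obtain ⟨U, hU, hUT⟩ := hshatter T hT
  obtain ⟨H, hH⟩ := exists_expectation_eq_sub hO hO_herm hU b
  exact ⟨H, fun ρ hρ ↦ by rw [hH ρ (hS ρ hρ), sub_nonneg, hUT ρ hρ]⟩

end Observables

section JointType

variable {ι κ : Type*} [Fintype ι]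

theorem exists_perm_comp_eq_of_map_univ_eq {β : Type*} {f g : ι → β}
    (h : Finset.univ.val.map f = Finset.univ.val.map g) : ∃ σ : Equiv.Perm ι, g ∘ σ = f := by
  classical
  have card_fiber_eq (b : β) : Fintype.card {i // f i = b} = Fintype.card {i // g i = b} := by
    simpa only [Multiset.count_map, eq_comm (a := b), Fintype.card_subtype, Finset.card_def,
      Finset.filter_val] using congrArg (Multiset.count b) h
  exact ⟨Equiv.ofFiberEquiv fun b ↦ Fintype.equivOfCardEq (card_fiber_eq b),
    funext fun _ ↦ Equiv.ofFiberEquiv_map _ _⟩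

/-- The multiset of letter pairs `(y i, z i)` of two words `y`, `z` over the alphabet `κ`. It
classifies the orbits of `Equiv.Perm ι` on pairs of words. -/
def jointType (p : (ι → κ) × (ι → κ)) : Sym (κ × κ) (Fintype.card ι) :=
  ⟨Finset.univ.val.map fun i ↦ (p.1 i, p.2 i), by simp⟩

theorem exists_perm_comp_eq_of_jointType_eq {y z y' z' : ι → κ}
    (h : jointType (y, z) = jointType (y', z')) :
    ∃ σ : Equiv.Perm ι, y' ∘ σ = y ∧ z' ∘ σ = z := by
  obtain ⟨σ, hσ⟩ := exists_perm_comp_eq_of_map_univ_eq (congrArg Subtype.val h)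
  exact ⟨σ, congrArg (Prod.fst ∘ ·) hσ, congrArg (Prod.snd ∘ ·) hσ⟩

end JointType

section EquivariantOperators

theorem mul_permMatrix_eq_permMatrix_mul_iff {m R : Type*} [Fintype m] [DecidableEq m]
    [NonAssocSemiring R] {M : Matrix m m R} {σ : Equiv.Perm m} :
    M * σ.permMatrix R = σ.permMatrix R * M ↔ ∀ i j, M (σ i) (σ j) = M i j := by
  rw [PEquiv.mul_toMatrix_toPEquiv, PEquiv.toMatrix_toPEquiv_mul, ← Matrix.ext_iff]
  refine forall_congr' fun i ↦ ?_
  rw [← σ.forall_congr_right]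
  simp [eq_comm]

variable {ι κ : Type*} [Fintype ι] [DecidableEq κ]

variable (κ) in
/-- The representation of the symmetric group on `(ℂ^κ)^{⊗ι}` permuting the tensor factors, in the
computational basis `ι → κ`. Row `y` of a `permMatrix` has its one at the image of `y`, here
`y ∘ π`, which is why `π.symm` appears. -/
noncomputable def quditRep (π : Equiv.Perm ι) : Matrix (ι → κ) (ι → κ) ℂ :=
  Equiv.Perm.permMatrix ℂ (π.symm.arrowCongr (Equiv.refl κ))

theorem conjTranspose_quditRep (π : Equiv.Perm ι) : (quditRep κ π)ᴴ = quditRep κ π⁻¹ :=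
  conjTranspose_permMatrix _

theorem qubitRep_eq_quditRep (n : ℕ) (π : Equiv.Perm (Fin n)) :
    qubitRep n π = quditRep (Fin 2) π := by
  ext y z
  have h : y = (fun i ↦ z (π.symm i)) ↔ π.symm.arrowCongr (Equiv.refl (Fin 2)) y = z :=
    π.eq_comp_symm y z
  simp [qubitRep, quditRep, h]

variable [DecidableEq ι] [Fintype κ]

variable (ι κ) in
/-- The commutant of `quditRep`: the star-algebra of operators on `(ℂ^κ)^{⊗ι}` that are equivariant
under permutations of the tensor factors. -/
noncomputable def equivariantOperators : StarSubalgebra ℂ (Matrix (ι → κ) (ι → κ) ℂ) :=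
  StarSubalgebra.centralizer ℂ (Set.range (quditRep κ))

variable {M : Matrix (ι → κ) (ι → κ) ℂ}

theorem mem_equivariantOperators_iff :
    M ∈ equivariantOperators ι κ ↔ ∀ π : Equiv.Perm ι, M * quditRep κ π = quditRep κ π * M := by
  simp only [equivariantOperators, StarSubalgebra.mem_centralizer_iff, Set.forall_mem_range,
    star_eq_conjTranspose, conjTranspose_quditRep, eq_comm (b := M * _)]
  exact ⟨fun h π ↦ (h π).1, fun h π ↦ ⟨h π, h π⁻¹⟩⟩

theorem mem_equivariantOperators_qubit_iff {n : ℕ}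
    {M : Matrix (Fin n → Fin 2) (Fin n → Fin 2) ℂ} :
    M ∈ equivariantOperators (Fin n) (Fin 2) ↔
      ∀ π : Equiv.Perm (Fin n), M * qubitRep n π = qubitRep n π * M := by
  simp only [qubitRep_eq_quditRep, mem_equivariantOperators_iff]

theorem apply_eq_of_jointType_eq (hM : M ∈ equivariantOperators ι κ) {y z y' z' : ι → κ}
    (h : jointType (y, z) = jointType (y', z')) : M y z = M y' z' := by
  obtain ⟨σ, rfl, rfl⟩ := exists_perm_comp_eq_of_jointType_eq h
  exact mul_permMatrix_eq_permMatrix_mul_iff.1 (mem_equivariantOperators_iff.1 hM σ) y' z'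

theorem finrank_equivariantOperators_le :
    finrank ℂ (equivariantOperators ι κ) ≤ (Fintype.card κ ^ 2).multichoose (Fintype.card ι) := by
  let pullback : (Sym (κ × κ) (Fintype.card ι) → ℂ) →ₗ[ℂ] Matrix (ι → κ) (ι → κ) ℂ :=
    { toFun f := of fun y z ↦ f (jointType (y, z))
      map_add' _ _ := rfl
      map_smul' _ _ := rfl }
  have le_range :
      (equivariantOperators ι κ).toSubalgebra.toSubmodule ≤ LinearMap.range pullback := by
    intro M hM
    have factors : Function.FactorsThrough (fun p : (ι → κ) × (ι → κ) ↦ M p.1 p.2) jointType :=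
      fun _ _ h ↦ apply_eq_of_jointType_eq hM h
    exact ⟨Function.extend jointType (fun p ↦ M p.1 p.2) 0,
      Matrix.ext fun y z ↦ factors.extend_apply 0 (y, z)⟩
  calc finrank ℂ (equivariantOperators ι κ)
      ≤ finrank ℂ (LinearMap.range pullback) := Submodule.finrank_mono le_range
    _ ≤ finrank ℂ (Sym (κ × κ) (Fintype.card ι) → ℂ) := LinearMap.finrank_range_le pullback
    _ = (Fintype.card κ ^ 2).multichoose (Fintype.card ι) := by
      rw [finrank_fintype_fun_eq_card, Sym.card_sym_eq_multichoose, Fintype.card_prod, sq]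

end EquivariantOperators

theorem multichoose_four (n : ℕ) : Nat.multichoose 4 n = (n + 3).choose 3 := by
  rw [Nat.multichoose_eq, ← Nat.choose_symm_add, show 4 + n - 1 = n + 3 by lia]

theorem vc_dim_Sn_equivariant_general {ι κ : Type*} [Fintype ι] [DecidableEq ι] [Fintype κ]
    [DecidableEq κ] {O : Matrix (ι → κ) (ι → κ) ℂ} (hO : O ∈ equivariantOperators ι κ)
    (hO_herm : O.IsHermitian) (b : ℝ) {S : Finset (Matrix (ι → κ) (ι → κ) ℂ)}
    (hS : ∀ ρ ∈ S, ρ.trace = 1)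
    (hshatter : ∀ T ⊆ S, ∃ U ∈ equivariantOperators ι κ,
      ∀ ρ ∈ S, b ≤ (U * ρ * Uᴴ * O).trace.re ↔ ρ ∈ T) :
    S.card ≤ (Fintype.card κ ^ 2).multichoose (Fintype.card ι) :=
  (card_le_finrank_of_shattered_by_expectations hO hO_herm b hS hshatter).trans
    finrank_equivariantOperators_le

/-- **VC dimension of `S_n`-equivariant QNN classifiers.** If a finite set `S` of density
matrices is shattered by the classifiers `ρ ↦ (Tr[U ρ U† O] ≥ b)`, where `U` ranges over
`S_n`-equivariant unitaries and `O` is an `S_n`-equivariant Hermitian measurement, then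
`|S| ≤ Te_{n+1} = C(n+3, 3)`. -/
theorem vc_dim_Sn_equivariant (n : ℕ) (hn : 1 ≤ n)
    (O : Matrix (Fin n → Fin 2) (Fin n → Fin 2) ℂ) (hO : O.IsHermitian)
    (hOcomm : ∀ π : Equiv.Perm (Fin n), O * qubitRep n π = qubitRep n π * O)
    (b : ℝ)
    (S : Finset (Matrix (Fin n → Fin 2) (Fin n → Fin 2) ℂ))
    (hS : ∀ ρ ∈ S, ρ.PosSemidef ∧ ρ.trace = 1)
    (hshatter : ∀ T ⊆ S, ∃ U : Matrix (Fin n → Fin 2) (Fin n → Fin 2) ℂ,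
      U ∈ Matrix.unitaryGroup (Fin n → Fin 2) ℂ ∧
      (∀ π : Equiv.Perm (Fin n), U * qubitRep n π = qubitRep n π * U) ∧
      ∀ ρ ∈ S, (b ≤ ((U * ρ * Uᴴ * O).trace).re ↔ ρ ∈ T)) :
    S.card ≤ (n + 3).choose 3 := by
  simpa [multichoose_four] using vc_dim_Sn_equivariant_general
    (mem_equivariantOperators_qubit_iff.2 hOcomm) hO b (fun ρ hρ ↦ (hS ρ hρ).2)
    fun T hT ↦ (hshatter T hT).imp fun U hU ↦
      ⟨mem_equivariantOperators_qubit_iff.2 hU.2.1, hU.2.2⟩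
end
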